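/- arXiv:2102.12099 — 2 statements merged into one kernel-verified Lean document; each statement's English description precedes it below -/
import Mathlib

section
/- Let p be a prime, m ∈ ℕ with 0 < m < p, α₀ := m/p, α₁ ∈ (α₀, 1), and let M be the PI-RAPPOR randomizer. Then for all nonzero x, j ∈ ZMod p, the probability that the decoded bit at position j equals 1 is Pr_{φ ~ M_x}[bool(φ₀ + j·φ₁) = 1] = α₁ if x = j, and = α₀ if x ≠ j. -/
open Finset

theorem aux_sum_val (p : ℕ) [Fact p.Prime] (m : ℕ) (hmp : m < p) (a b : ℝ) :
    ∑ u : ZMod p, (if u.val < m then a else b) = m * a + (p - m) * b := by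
  have hc : (univ.filter (fun u : ZMod p => u.val < m)).card = m := by
    have : (univ.filter (fun u : ZMod p => u.val < m)).card = (Finset.range m).card := by
      refine Finset.card_bij' (fun u _ => u.val) (fun n _ => (n : ZMod p)) ?_ ?_ ?_ ?_
      · intro u hu
        simpa using hu
      · intro n hn
        have hn' : n < m := by simpa using hn
        simp [ZMod.val_natCast_of_lt (hn'.trans hmp), hn']
      · intro u hu
        simp
      · intro n hn
        have hn' : n < m := by simpa using hn
        exact ZMod.val_natCast_of_lt (hn'.trans hmp)
    simpa using this
  have h1 : ∀ u : ZMod p, (if u.val < m then a else b) = (if u.val < m then a - b else 0) + b := by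
    intro u
    split_ifs <;> ring
  simp_rw [h1]
  rw [Finset.sum_add_distrib, ← Finset.sum_filter, Finset.sum_const, hc]
  simp [ZMod.card]
  ring

theorem aux_same (p : ℕ) [Fact p.Prime] (j : ZMod p) (F : ZMod p → ℝ) :
    ∑ φ : ZMod p × ZMod p, F (φ.1 + j * φ.2) = p * ∑ u, F u := by
  rw [Fintype.sum_prod_type_right]
  have : ∀ y : ZMod p, ∑ x : ZMod p, F (x + j * y) = ∑ u, F u := fun y =>
    Equiv.sum_comp (Equiv.addRight (j * y)) F
  simp [this, ZMod.card]

theorem aux_diff (p : ℕ) [Fact p.Prime] (x j : ZMod p) (hxj : x ≠ j) (F G : ZMod p → ℝ) :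
    ∑ φ : ZMod p × ZMod p, F (φ.1 + x * φ.2) * G (φ.1 + j * φ.2) = (∑ u, F u) * ∑ v, G v := by
  rw [Finset.sum_mul_sum, ← Fintype.sum_prod_type']
  have hinj : Function.Injective
      (fun φ : ZMod p × ZMod p => (φ.1 + x * φ.2, φ.1 + j * φ.2)) := by
    rintro ⟨a, b⟩ ⟨c, d⟩ h
    simp only [Prod.mk.injEq] at h
    obtain ⟨h1, h2⟩ := h
    have h3 : (x - j) * (b - d) = 0 := by linear_combination h1 - h2
    have h4 : b = d := by
      rcases mul_eq_zero.1 h3 with h | h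
      · exact absurd (sub_eq_zero.1 h) hxj
      · exact sub_eq_zero.1 h
    subst h4
    simpa using h1
  exact Function.Bijective.sum_comp (Finite.injective_iff_bijective.1 hinj)
    (fun q : ZMod p × ZMod p => F q.1 * G q.2)

/-- **The marginal of each decoded bit of PI-RAPPOR.**
For nonzero `x, j ∈ ZMod p`, the probability under `M_x` that the decoded bit at position
`j` equals one is `α₁` if `x = j` and `α₀` otherwise. -/
theorem stmt_14 (p : ℕ) [Fact p.Prime] (m : ℕ) (hm0 : 0 < m) (hmp : m < p)
    (α₀ α₁ : ℝ) (hα₀ : α₀ = (m : ℝ) / p) (hα₁ : α₀ < α₁) (hα₁' : α₁ < 1)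
    (M : ZMod p → ZMod p × ZMod p → ℝ)
    (hM : ∀ j φ, M j φ =
      if (φ.1 + j * φ.2).val < m then α₁ / (m * p) else (1 - α₁) / ((p - m) * p)) :
    ∀ x j : ZMod p, x ≠ 0 → j ≠ 0 →
      ∑ φ ∈ univ.filter (fun φ : ZMod p × ZMod p => (φ.1 + j * φ.2).val < m), M x φ =
        if x = j then α₁ else α₀ := by
  intro x j _ _
  have hp : (p : ℝ) ≠ 0 := by
    have : 0 < p := hm0.trans hmp
    positivity
  have hm : (m : ℝ) ≠ 0 := by positivity
  have hpm : (p : ℝ) - m ≠ 0 := by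
    have : (m : ℝ) < p := by exact_mod_cast hmp
    linarith
  rw [Finset.sum_filter]
  simp_rw [hM]
  by_cases hxj : x = j
  · subst hxj
    rw [if_pos rfl]
    have h := aux_same p x (fun u => if u.val < m then α₁ / (m * p) else 0)
    rw [aux_sum_val p m hmp] at h
    trans (p * (m * (α₁ / (m * p)) + (p - m) * 0) : ℝ)
    · rw [← h]
      refine Finset.sum_congr rfl fun φ _ => ?_
      split_ifs <;> rfl
    · field_simp
      ring
  · rw [if_neg hxj]
    have h := aux_diff p x j hxj
      (fun u => if u.val < m then α₁ / (m * p) else (1 - α₁) / ((p - m) * p))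
      (fun u => if u.val < m then 1 else 0)
    rw [aux_sum_val p m hmp, aux_sum_val p m hmp] at h
    simp only [mul_ite, mul_one, mul_zero] at h
    rw [h, hα₀]
    field_simp
    ring
end

section
/- Let p be a prime, m ∈ ℕ with 0 < m < p, α₀ := m/p, α₁ ∈ (α₀, 1), and M the PI-RAPPOR randomizer. Let n ∈ ℕ, let x₁, …, x_n be nonzero elements of ZMod p, and for nonzero j ∈ ZMod p let c_j := #{i ∈ [n] : x_i = j}. Let (Ω, P) be a probability space and φ¹, …, φⁿ : Ω → (ZMod p)² be independent random variables with φ^i distributed according to M_{x_i}. Define the estimator c̃_j := Σ_{i=1}^{n} (bool(φ^i₀ + j·φ^i₁) − α₀)/(α₁ − α₀). Then for every nonzero j ∈ ZMod p: E[c̃_j] = c_j, and Var[c̃_j] = c_j·(1 − α₀ − α₁)/(α₁ − α₀) + n·α₀·(1 − α₀)/(α₁ − α₀)². -/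
open Finset MeasureTheory


lemma pr_sum_same (p : ℕ) [Fact p.Prime] (F : ZMod p → ℝ) (j : ZMod p) :
    ∑ a : ZMod p × ZMod p, F (a.1 + j * a.2) = p * ∑ z, F z := by
  rw [Fintype.sum_prod_type_right]
  have : ∀ y : ZMod p, ∑ z : ZMod p, F (z + j * y) = ∑ z, F z := fun y =>
    Equiv.sum_comp (Equiv.addRight (j * y)) F
  simp only [this]
  simp [ZMod.card]

lemma pr_sum_diff (p : ℕ) [Fact p.Prime] (F H : ZMod p → ℝ) (j k : ZMod p) (h : j ≠ k) :
    ∑ a : ZMod p × ZMod p, F (a.1 + j * a.2) * H (a.1 + k * a.2) = (∑ z, F z) * ∑ z, H z := by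
  rw [Finset.sum_mul_sum, ← Fintype.sum_prod_type']
  have hjk : j - k ≠ 0 := sub_ne_zero.2 h
  have hinj : Function.Injective
      (fun a : ZMod p × ZMod p => (a.1 + j * a.2, a.1 + k * a.2)) := by
    rintro ⟨a, b⟩ ⟨c, d⟩ h
    simp only [Prod.mk.injEq] at h
    obtain ⟨h1, h2⟩ := h
    have h3 : (j - k) * (b - d) = 0 := by linear_combination h1 - h2
    have h4 : b = d := by
      rcases mul_eq_zero.1 h3 with h | h
      · exact absurd h hjk
      · exact sub_eq_zero.1 h
    subst h4
    simpa using h1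
  exact Function.Bijective.sum_comp (Finite.injective_iff_bijective.1 hinj)
    (fun a : ZMod p × ZMod p => F a.1 * H a.2)

lemma pr_sum_ite (p : ℕ) [Fact p.Prime] (m : ℕ) (hmp : m < p) (A B : ℝ) :
    ∑ z : ZMod p, (if z.val < m then A else B) = m * A + (p - m) * B := by
  have h1 : ∑ z : ZMod p, (if z.val < m then A else B)
      = ∑ i ∈ range p, (if i < m then A else B) := by
    symm
    apply Finset.sum_bij' (fun (i : ℕ) _ => (i : ZMod p)) (fun (z : ZMod p) _ => z.val)
    · simp
    · intro z _; simpa using ZMod.val_lt z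
    · intro i hi; exact ZMod.val_cast_of_lt (by simpa using hi)
    · intro z _; simp
    · intro i hi; rw [ZMod.val_cast_of_lt (by simpa using hi)]
  rw [h1]
  obtain ⟨k, rfl⟩ := Nat.exists_eq_add_of_lt hmp
  rw [add_assoc, Finset.sum_range_add,
    Finset.sum_congr rfl (g := fun _ => A) (fun i hi => by simp at hi; simp [hi])]
  simp

lemma pr_prod {n : ℕ} {X : Type*} [Fintype X] [DecidableEq X] (w u : Fin n → X → ℝ) :
    ∑ f : Fin n → X, (∏ i, w i (f i)) * ∏ i, u i (f i) = ∏ i, ∑ a, w i a * u i a := by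
  rw [Finset.prod_univ_sum, Fintype.piFinset_univ]
  simp [Finset.prod_mul_distrib]

lemma pr_one {n : ℕ} {X : Type*} [Fintype X] [DecidableEq X] (w : Fin n → X → ℝ)
    (hw : ∀ i, ∑ a, w i a = 1) (k : Fin n) (g : X → ℝ) :
    ∑ f : Fin n → X, (∏ i, w i (f i)) * g (f k) = ∑ a, w k a * g a := by
  have h := pr_prod w (fun i a => if i = k then g a else 1)
  simp only [Finset.prod_ite_eq', Finset.mem_univ, if_true] at h
  rw [h, Finset.prod_eq_single k]
  · simp
  · intro i _ hi; simp [hi, hw]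
  · simp

lemma pr_two {n : ℕ} {X : Type*} [Fintype X] [DecidableEq X] (w : Fin n → X → ℝ)
    (k l : Fin n) (hkl : k ≠ l) (g g' : X → ℝ) (h0 : ∑ a, w k a * g a = 0) :
    ∑ f : Fin n → X, (∏ i, w i (f i)) * (g (f k) * g' (f l)) = 0 := by
  have h := pr_prod w (fun i a => (if i = k then g a else 1) * (if i = l then g' a else 1))
  simp only [Finset.prod_mul_distrib, Finset.prod_ite_eq', Finset.mem_univ, if_true] at h
  rw [h]
  apply Finset.prod_eq_zero (Finset.mem_univ k)
  simp [hkl, h0]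

lemma pr_var {n : ℕ} {X : Type*} [Fintype X] [DecidableEq X] (w : Fin n → X → ℝ)
    (hw : ∀ i, ∑ a, w i a = 1) (G : Fin n → X → ℝ) (h0 : ∀ i, ∑ a, w i a * G i a = 0) :
    ∑ f : Fin n → X, (∏ i, w i (f i)) * (∑ i, G i (f i)) ^ 2
      = ∑ i, ∑ a, w i a * G i a ^ 2 := by
  simp only [sq (∑ i, G i _), Finset.sum_mul_sum]
  simp only [Finset.mul_sum]
  rw [Finset.sum_comm]
  apply Finset.sum_congr rfl
  intro k _
  rw [Finset.sum_comm, Finset.sum_eq_single k]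
  · rw [← pr_one w hw k (fun a => G k a ^ 2)]
    simp only [sq]
  · intro l _ hl
    exact pr_two w k l hl.symm (G k) (G l) (h0 k)
  · simp

lemma pr_integral {n : ℕ} {X : Type*} [Fintype X] [DecidableEq X]
    [MeasurableSpace X] [MeasurableSingletonClass X]
    {Ω : Type*} [MeasurableSpace Ω] (P : Measure Ω) [IsProbabilityMeasure P]
    (φ : Fin n → Ω → X) (hmeas : ∀ i, Measurable (φ i)) (F : (Fin n → X) → ℝ) :
    ∫ ω, F (fun i => φ i ω) ∂P = ∑ f, (P {ω | ∀ i, φ i ω = f i}).toReal * F f := by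
  have hm : Measurable (fun ω i => φ i ω) := measurable_pi_lambda _ hmeas
  have : IsProbabilityMeasure (P.map (fun ω i => φ i ω)) :=
    Measure.isProbabilityMeasure_map hm.aemeasurable
  have hF : Measurable F := measurable_of_finite F
  rw [← integral_map (f := F) hm.aemeasurable hF.aestronglyMeasurable,
    integral_fintype (Integrable.of_finite)]
  apply Finset.sum_congr rfl
  intro f _
  rw [smul_eq_mul, measureReal_def, Measure.map_apply hm (measurableSet_singleton f)]
  congr 3
  ext ω
  simp [funext_iff]

/-- **Unbiasedness and variance of the PI-RAPPOR frequency estimator.**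
With `n` users holding nonzero inputs `x₁,…,x_n ∈ ZMod p`, independent reports
`φ¹,…,φⁿ` with `φ^i ~ M_{x_i}` (their joint law is the product of the `M_{x_i}`), and
estimator `c̃_j = ∑_i (bool(φ^i₀ + j·φ^i₁) − α₀)/(α₁ − α₀)`, we have `E[c̃_j] = c_j` and
`Var[c̃_j] = c_j·(1 − α₀ − α₁)/(α₁ − α₀) + n·α₀(1 − α₀)/(α₁ − α₀)²` for every nonzero `j`. -/
theorem stmt_15 (p : ℕ) [Fact p.Prime] (m : ℕ) (hm0 : 0 < m) (hmp : m < p)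
    (α₀ α₁ : ℝ) (hα₀ : α₀ = (m : ℝ) / p) (hα₁ : α₀ < α₁) (hα₁' : α₁ < 1)
    (M : ZMod p → ZMod p × ZMod p → ℝ)
    (hM : ∀ j φ, M j φ =
      if (φ.1 + j * φ.2).val < m then α₁ / (m * p) else (1 - α₁) / ((p - m) * p))
    (n : ℕ) (x : Fin n → ZMod p) (hx : ∀ i, x i ≠ 0)
    {Ω : Type*} [MeasurableSpace Ω] (P : Measure Ω) [IsProbabilityMeasure P]
    [MeasurableSpace (ZMod p × ZMod p)] [MeasurableSingletonClass (ZMod p × ZMod p)]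
    (φ : Fin n → Ω → ZMod p × ZMod p) (hmeas : ∀ i, Measurable (φ i))
    (hjoint : ∀ f : Fin n → ZMod p × ZMod p,
      (P {ω | ∀ i, φ i ω = f i}).toReal = ∏ i, M (x i) (f i))
    (c : ZMod p → ℕ) (hc : ∀ j, c j = (univ.filter fun i => x i = j).card)
    (ctil : ZMod p → Ω → ℝ)
    (hctil : ∀ j ω, ctil j ω =
      ∑ i, ((if ((φ i ω).1 + j * (φ i ω).2).val < m then (1 : ℝ) else 0) - α₀) / (α₁ - α₀)) :
    ∀ j : ZMod p, j ≠ 0 →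
      (∫ ω, ctil j ω ∂P) = c j ∧
      (∫ ω, (ctil j ω - c j) ^ 2 ∂P) =
        c j * (1 - α₀ - α₁) / (α₁ - α₀) + n * (α₀ * (1 - α₀)) / (α₁ - α₀) ^ 2 := by
  intro j _
  have hp : (0 : ℝ) < p := by exact_mod_cast (Fact.out : p.Prime).pos
  have hm : (0 : ℝ) < m := by exact_mod_cast hm0
  have hpm : (0 : ℝ) < p - m := by
    have : (m : ℝ) < p := by exact_mod_cast hmp
    linarith
  have hd : α₁ - α₀ ≠ 0 := by linarith
  have hw : ∀ k, ∑ a, M k a = 1 := by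
    intro k
    simp only [hM]
    rw [pr_sum_same p (fun z => if z.val < m then α₁ / (m * p) else (1 - α₁) / ((p - m) * p)) k,
      pr_sum_ite p m hmp]
    field_simp
    ring
  let b : ZMod p × ZMod p → ℝ := fun a => if (a.1 + j * a.2).val < m then 1 else 0
  have hb : ∀ a, b a ^ 2 = b a := by
    intro a; simp only [b]; split_ifs <;> simp
  have hMb : ∀ k, ∑ a, M k a * b a = if k = j then α₁ else α₀ := by
    intro k
    simp only [hM, b]
    split_ifs with hk
    · subst hk
      have e : ∀ a : ZMod p × ZMod p,
          (if (a.1 + k * a.2).val < m then α₁ / (m * p) else (1 - α₁) / ((p - m) * p))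
            * (if (a.1 + k * a.2).val < m then (1 : ℝ) else 0)
          = if (a.1 + k * a.2).val < m then α₁ / (m * p) else 0 := by
        intro a; split_ifs <;> simp
      simp only [e]
      rw [pr_sum_same p (fun z => if z.val < m then α₁ / (m * p) else 0) k,
        pr_sum_ite p m hmp]
      field_simp
      ring
    · rw [pr_sum_diff p
        (fun z => if z.val < m then α₁ / (m * p) else (1 - α₁) / ((p - m) * p))
        (fun z => if z.val < m then 1 else 0) k j hk, pr_sum_ite p m hmp, pr_sum_ite p m hmp, hα₀]
      field_simp
      ring
  let G : Fin n → ZMod p × ZMod p → ℝ := fun i a =>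
    (b a - α₀) / (α₁ - α₀) - if x i = j then 1 else 0
  have hcc : (c j : ℝ) = ∑ i, if x i = j then (1 : ℝ) else 0 := by
    rw [hc, Finset.sum_boole]
  have hG0 : ∀ i, ∑ a, M (x i) a * G i a = 0 := by
    intro i
    have e : ∀ a, M (x i) a * G i a = M (x i) a * b a * (1 / (α₁ - α₀))
        + M (x i) a * (-α₀ / (α₁ - α₀) - if x i = j then 1 else 0) := by
      intro a; simp only [G]; ring
    simp only [e]
    rw [Finset.sum_add_distrib, ← Finset.sum_mul, ← Finset.sum_mul, hMb, hw]
    split_ifs <;> field_simp <;> ring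
  have hG2 : ∀ i, ∑ a, M (x i) a * G i a ^ 2 =
      (if x i = j then (1 : ℝ) else 0) * ((1 - α₀ - α₁) / (α₁ - α₀))
        + α₀ * (1 - α₀) / (α₁ - α₀) ^ 2 := by
    intro i
    have e : ∀ a, M (x i) a * G i a ^ 2 =
        M (x i) a * b a * ((1 / (α₁ - α₀)) ^ 2
          + 2 * (1 / (α₁ - α₀)) * (-α₀ / (α₁ - α₀) - if x i = j then 1 else 0))
        + M (x i) a * (-α₀ / (α₁ - α₀) - if x i = j then 1 else 0) ^ 2 := by
      intro a
      simp only [G]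
      linear_combination (M (x i) a * (1 / (α₁ - α₀)) ^ 2) * hb a
    simp only [e]
    rw [Finset.sum_add_distrib, ← Finset.sum_mul, ← Finset.sum_mul, hMb, hw]
    split_ifs <;> field_simp <;> ring
  have hct : ∀ ω, ctil j ω - c j = ∑ i, G i (φ i ω) := by
    intro ω
    rw [hctil, hcc, ← Finset.sum_sub_distrib]
  constructor
  · have hct' : ∀ ω, ctil j ω = (fun f : Fin n → ZMod p × ZMod p => ∑ i, G i (f i) + c j)
        (fun i => φ i ω) := by
      intro ω; simp only [← hct]; ring
    simp only [hct']
    have hI := pr_integral P φ hmeas (fun f => ∑ i, G i (f i) + c j)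
    simp only [hjoint] at hI
    rw [hI]
    simp only [mul_add, Finset.sum_add_distrib, Finset.mul_sum]
    rw [Finset.sum_comm]
    have h1 : ∑ f : Fin n → ZMod p × ZMod p, ∏ i, M (x i) (f i) = 1 := by
      have := pr_prod (fun i => M (x i)) (fun _ _ => 1)
      simpa [hw] using this
    rw [← Finset.sum_mul, h1, one_mul, Finset.sum_eq_zero, zero_add]
    intro k _
    rw [pr_one (fun i => M (x i)) (fun i => hw _) k (G k), hG0]
  · simp only [hct]
    have hI := pr_integral P φ hmeas (fun f => (∑ i, G i (f i)) ^ 2)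
    simp only [hjoint] at hI
    rw [hI, pr_var (fun i => M (x i)) (fun i => hw _) G hG0]
    simp only [hG2]
    rw [Finset.sum_add_distrib, ← Finset.sum_mul, ← hcc]
    simp
    ring
end
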